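/- arXiv:2412.20809 — 2 statements merged into one kernel-verified Lean document; each statement's English description precedes it below -/
import Mathlib

section
/- Let N ≥ 7 and m ≥ 1 with 2m < ⌊N/2⌋. The map λ ↦ λ' (erasing the first column of the Young diagram) is a bijection from the set A_m = {orthogonal partitions λ of N with λ₁ ≥ 3 and N − p(λ) = 2m} onto the set of symplectic partitions ν of 2m with ν₁ ≥ 2, and for all λ, μ ∈ A_m one has λ ⊴ μ in the dominance order if and only if λ' ⊴ μ'. (Hence the subposet Υ_m of nilpotent SO_N-orbits is isomorphic, as a poset under closure order, to the poset of nonzero nilpotent orbits of sp_{2m}.) -/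
noncomputable section

/-- A partition of `n`, represented as an antitone function `ℕ → ℕ` (the parts in weakly
decreasing order, padded by zeros), vanishing from index `n` on and summing to `n`. -/
def IsPartitionOf (n : ℕ) (f : ℕ → ℕ) : Prop :=
  Antitone f ∧ f n = 0 ∧ ∑ i ∈ Finset.range n, f i = n

/-- The number of (nonzero) parts of a partition of `n`. -/
def numParts (n : ℕ) (f : ℕ → ℕ) : ℕ :=
  ((Finset.range n).filter (fun i => f i ≠ 0)).card

/-- The multiplicity of `m` as a part of a partition of `n`. -/
def multPart (n : ℕ) (f : ℕ → ℕ) (m : ℕ) : ℕ :=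
  ((Finset.range n).filter (fun i => f i = m)).card

/-- A symplectic partition of `n`: every odd part occurs with even multiplicity. -/
def SymplecticPartition (n : ℕ) (f : ℕ → ℕ) : Prop :=
  IsPartitionOf n f ∧ ∀ m : ℕ, Odd m → Even (multPart n f m)

/-- An orthogonal partition of `n`: every (nonzero) even part occurs with even
multiplicity. -/
def OrthogonalPartition (n : ℕ) (f : ℕ → ℕ) : Prop :=
  IsPartitionOf n f ∧ ∀ m : ℕ, 0 < m → Even m → Even (multPart n f m)

/-- The dominance order on partitions. -/
def Dominates (f g : ℕ → ℕ) : Prop :=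
  ∀ m : ℕ, ∑ i ∈ Finset.range m, f i ≤ ∑ i ∈ Finset.range m, g i

/-- Erasing the first column of the Young diagram. -/
def eraseCol (f : ℕ → ℕ) : ℕ → ℕ := fun i => f i - 1

/-- The nonzero parts of a partition are exactly those with index below the number of parts. -/
theorem IsPartitionOf.ne_zero_iff {n : ℕ} {f : ℕ → ℕ} (hf : IsPartitionOf n f) (i : ℕ) :
    f i ≠ 0 ↔ i < numParts n f := by
  obtain ⟨hanti, hz, -⟩ := hf
  have hex : ∃ k, f k = 0 := ⟨n, hz⟩
  have hiff : ∀ j, f j ≠ 0 ↔ j < Nat.find hex := fun j => by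
    refine ⟨fun hj => ?_, fun hj => Nat.find_min hex hj⟩
    by_contra! hle
    have := hanti hle
    rw [Nat.find_spec hex] at this
    omega
  have hfilter : (Finset.range n).filter (fun i => f i ≠ 0) = Finset.range (Nat.find hex) := by
    ext j
    have := Nat.find_min' hex hz
    simp only [Finset.mem_filter, Finset.mem_range, hiff]
    omega
  rw [numParts, hfilter, Finset.card_range]
  exact hiff i

/-- A partition is recovered from its first column and the rest of its diagram. -/
theorem IsPartitionOf.eq_eraseCol_add {n : ℕ} {f : ℕ → ℕ} (hf : IsPartitionOf n f) (i : ℕ) :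
    f i = eraseCol f i + if i < numParts n f then 1 else 0 := by
  have := hf.ne_zero_iff i
  unfold eraseCol
  split_ifs <;> omega

theorem sum_range_ite_lt (k p : ℕ) :
    ∑ i ∈ Finset.range k, (if i < p then 1 else 0) = min k p := by
  induction k with
  | zero => simp
  | succ k ih =>
    rw [Finset.sum_range_succ, ih]
    split_ifs <;> omega

/-- Partial sums of a partition obtained by adding a first column of length `p`. -/
theorem sum_range_of_eq_add_ite {f g : ℕ → ℕ} {p : ℕ}
    (h : ∀ i, f i = g i + if i < p then 1 else 0) (k : ℕ) :
    ∑ i ∈ Finset.range k, f i = ∑ i ∈ Finset.range k, g i + min k p := by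
  simp only [h, Finset.sum_add_distrib, sum_range_ite_lt]

/-- Adding a first column raises every nonzero part by one, preserving multiplicities. -/
theorem multPart_of_eq_add_ite {f g : ℕ → ℕ} {n p N k : ℕ}
    (h : ∀ i, f i = g i + if i < p then 1 else 0) (hg : ∀ i, n ≤ i → g i = 0)
    (hnp : n ≤ p) (hpN : p ≤ N) (hk : 0 < k) :
    multPart N f (k + 1) = multPart n g k := by
  unfold multPart
  congr 1
  ext i
  have hi := h i
  have hgi := hg i
  simp only [Finset.mem_filter, Finset.mem_range]
  split_ifs at hi <;> omega

/-- An antitone sequence with partial sum `n` vanishes from index `n` on. -/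
theorem Antitone.eq_zero_of_sum_range_eq {g : ℕ → ℕ} (hg : Antitone g) {n N i : ℕ} (hnN : n < N)
    (hsum : ∑ j ∈ Finset.range N, g j = n) (hi : n ≤ i) : g i = 0 := by
  by_contra hne
  have hlower : ∑ _j ∈ Finset.range (n + 1), 1 ≤ ∑ j ∈ Finset.range (n + 1), g j :=
    Finset.sum_le_sum fun j hj => by
      have := hg (show j ≤ i by simp at hj; omega)
      omega
  have hupper : ∑ j ∈ Finset.range (n + 1), g j ≤ ∑ j ∈ Finset.range N, g j :=
    Finset.sum_le_sum_of_subset (Finset.range_subset_range.2 hnN)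
  simp at hlower
  omega

theorem sum_range_eq_of_eq_zero {g : ℕ → ℕ} {n N : ℕ} (hnN : n ≤ N)
    (hg : ∀ i, n ≤ i → g i = 0) :
    ∑ i ∈ Finset.range n, g i = ∑ i ∈ Finset.range N, g i :=
  Finset.sum_subset (Finset.range_subset_range.2 hnN) fun i _ hi => hg i (by simpa using hi)

theorem OrthogonalPartition.symplecticPartition_eraseCol {N n : ℕ} {f : ℕ → ℕ}
    (hf : OrthogonalPartition N f) (hn : numParts N f + n = N) (hle : n ≤ numParts N f) (hlt : n < N) :
    SymplecticPartition n (eraseCol f) := by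
  have hadd := hf.1.eq_eraseCol_add
  have hanti : Antitone (eraseCol f) := fun i j hij => Nat.sub_le_sub_right (hf.1.1 hij) 1
  have hsum : ∑ i ∈ Finset.range N, eraseCol f i = n := by
    have := sum_range_of_eq_add_ite hadd N
    rw [hf.1.2.2] at this
    omega
  have hzero : ∀ i, n ≤ i → eraseCol f i = 0 := fun i hi =>
    hanti.eq_zero_of_sum_range_eq hlt hsum hi
  refine ⟨⟨hanti, hzero n le_rfl, (sum_range_eq_of_eq_zero hlt.le hzero).trans hsum⟩,
    fun k hk => ?_⟩
  rw [← multPart_of_eq_add_ite (N := N) hadd hzero hle (by omega) hk.pos]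
  exact hf.2 _ k.succ_pos hk.add_one

theorem IsPartitionOf.eq_zero {n i : ℕ} {g : ℕ → ℕ} (hg : IsPartitionOf n g) (hi : n ≤ i) :
    g i = 0 :=
  Nat.le_zero.1 (hg.2.1 ▸ hg.1 hi)

/-- Adding a sufficiently long first column to a symplectic partition gives an orthogonal one. -/
theorem SymplecticPartition.orthogonalPartition_add_ite {n p : ℕ} {g : ℕ → ℕ}
    (hg : SymplecticPartition n g) (hnp : n ≤ p) :
    OrthogonalPartition (n + p) (fun i => g i + if i < p then 1 else 0) := by
  have hzero : ∀ i, n ≤ i → g i = 0 := fun i hi => hg.1.eq_zero hi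
  refine ⟨⟨fun i j hij => ?_, ?_, ?_⟩, fun k hk hke => ?_⟩
  · have := hg.1.1 hij
    dsimp only
    split_ifs <;> omega
  · simp [hzero (n + p) (by omega)]
  · rw [sum_range_of_eq_add_ite (fun _ => rfl), ← sum_range_eq_of_eq_zero (by omega) hzero,
      hg.1.2.2]
    omega
  · obtain ⟨k, rfl⟩ : ∃ l, k = l + 1 := ⟨k - 1, by omega⟩
    have hko : Odd k := by simpa [Nat.even_add_one] using hke
    rw [multPart_of_eq_add_ite (fun _ => rfl) hzero hnp (by omega) hko.pos]
    exact hg.2 k hko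

/-- For `N ≥ 7` and `1 ≤ m` with `2m < ⌊N/2⌋`, erasing the first column is a bijection
from `A_m = {orthogonal λ ⊢ N : λ₁ ≥ 3, N − p(λ) = 2m}` onto
`{symplectic ν ⊢ 2m : ν₁ ≥ 2}`, and it preserves and reflects the dominance order. -/
theorem stmt9 (N m : ℕ) (hN : 7 ≤ N) (hm : 1 ≤ m) (hmN : 2 * m < N / 2) :
    Set.BijOn eraseCol
      {f | OrthogonalPartition N f ∧ 3 ≤ f 0 ∧ N - numParts N f = 2 * m}
      {g | SymplecticPartition (2 * m) g ∧ 2 ≤ g 0} ∧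
    ∀ f ∈ {f : ℕ → ℕ | OrthogonalPartition N f ∧ 3 ≤ f 0 ∧ N - numParts N f = 2 * m},
      ∀ g ∈ {f : ℕ → ℕ | OrthogonalPartition N f ∧ 3 ≤ f 0 ∧ N - numParts N f = 2 * m},
        (Dominates f g ↔ Dominates (eraseCol f) (eraseCol g)) := by
  have hparts : ∀ f : ℕ → ℕ, N - numParts N f = 2 * m → numParts N f = N - 2 * m :=
    fun f hf => by omega
  refine ⟨⟨?_, ?_, ?_⟩, ?_⟩
  · rintro f ⟨hf, hf0, hfm⟩
    refine ⟨hf.symplecticPartition_eraseCol (by omega) (by omega) (by omega), ?_⟩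
    unfold eraseCol
    omega
  · rintro f ⟨hf, -, hfm⟩ g ⟨hg, -, hgm⟩ hfg
    funext i
    rw [hf.1.eq_eraseCol_add i, hg.1.eq_eraseCol_add i, hfg, hparts f hfm, hparts g hgm]
  · rintro g ⟨hg, hg0⟩
    have horth := hg.orthogonalPartition_add_ite (p := N - 2 * m) (by omega)
    rw [show 2 * m + (N - 2 * m) = N by omega] at horth
    have hzero : ∀ i, 2 * m ≤ i → g i = 0 := fun i hi => hg.1.eq_zero hi
    refine ⟨_, ⟨horth, ?_, ?_⟩, ?_⟩
    · rw [if_pos (by omega)]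
      omega
    · have hiff := horth.1.ne_zero_iff
      have hlast := hiff (N - 2 * m)
      have hprev := hiff (N - 2 * m - 1)
      rw [if_neg (by omega), hzero _ (by omega)] at hlast
      rw [if_pos (by omega)] at hprev
      omega
    · funext i
      have := hzero i
      unfold eraseCol
      dsimp only
      split_ifs <;> omega
  · rintro f ⟨hf, -, hfm⟩ g ⟨hg, -, hgm⟩
    refine forall_congr' fun k => ?_
    rw [sum_range_of_eq_add_ite hf.1.eq_eraseCol_add, sum_range_of_eq_add_ite hg.1.eq_eraseCol_add,
      hparts f hfm, hparts g hgm]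
    omega
end
end

section
/- Let n ≥ 2 and let P be the set of symplectic partitions λ of 2n with p(λ) > n (equivalently 2n − p(λ) < n). Then the maximal elements of P with respect to the dominance order are exactly: (2m, 1^{2m}) if n = 2m is even, and (2m, 2, 1^{2m}) if n = 2m+1 is odd. (These are precisely the partitions of the maximal nilpotent Sp_{2n}-orbits O whose conical secant variety CS(O) is not all of sp_{2n}, i.e., whose secant variety is defective.) -/
noncomputable section

/-- The maximal elements of a set of partitions with respect to the dominance order. -/
def maximalsIn (P : Set (ℕ → ℕ)) : Set (ℕ → ℕ) :=
  {f | f ∈ P ∧ ∀ g ∈ P, Dominates f g → f = g}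

/-- The hook partition `(a, 1^b)`. -/
def hookPart (a b : ℕ) : ℕ → ℕ := fun i => if i = 0 then a else if i ≤ b then 1 else 0

/-- The partition `(a, 2, 1^b)`. -/
def hook2Part (a b : ℕ) : ℕ → ℕ := fun i =>
  if i = 0 then a else if i = 1 then 2 else if i ≤ b + 1 then 1 else 0

/-- The symplectic partitions of `2n` with more than `n` parts (the nilpotent
`Sp_{2n}`-orbits with defective secant variety). -/
def defectiveSp (n : ℕ) : Set (ℕ → ℕ) :=
  {f | SymplecticPartition (2 * n) f ∧ n < numParts (2 * n) f}

theorem Dominates.antisymm {f g : ℕ → ℕ} (hfg : Dominates f g) (hgf : Dominates g f) : f = g := by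
  funext i
  have h₁ := le_antisymm (hfg i) (hgf i)
  have h₂ := le_antisymm (hfg (i + 1)) (hgf (i + 1))
  rw [Finset.sum_range_succ, Finset.sum_range_succ] at h₂
  omega

/-- A greatest element is the unique maximal element. -/
theorem maximalsIn_eq_singleton {P : Set (ℕ → ℕ)} {h : ℕ → ℕ} (hP : h ∈ P)
    (hge : ∀ f ∈ P, Dominates f h) : maximalsIn P = {h} := by
  ext f
  constructor
  · rintro ⟨hf, hmax⟩
    exact hmax h hP (hge f hf)
  · rintro rfl
    exact ⟨hP, fun g hg hfg => hfg.antisymm (hge g hg)⟩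

theorem IsPartitionOf.sum_range_le {n : ℕ} {f : ℕ → ℕ} (hf : IsPartitionOf n f) (k : ℕ) :
    ∑ i ∈ Finset.range k, f i ≤ n := by
  obtain ⟨hanti, hzero, hsum⟩ := hf
  calc ∑ i ∈ Finset.range k, f i ≤ ∑ i ∈ Finset.range (max k n), f i :=
        Finset.sum_le_sum_of_subset (Finset.range_subset_range.2 (le_max_left k n))
    _ = ∑ i ∈ Finset.range n, f i := by
        refine (Finset.sum_subset (Finset.range_subset_range.2 (le_max_right k n)) ?_).symm
        intro i _ hi
        have := hanti (not_lt.1 (Finset.mem_range.not.1 hi))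
        omega
    _ = n := hsum

theorem pos_of_lt_numParts {N n : ℕ} {f : ℕ → ℕ} (hf : Antitone f) (h : n < numParts N f)
    {i : ℕ} (hi : i ≤ n) : 0 < f i := by
  by_contra hzero
  have hsub : (Finset.range N).filter (fun j => f j ≠ 0) ⊆ Finset.range n := by
    intro j hj
    rw [Finset.mem_filter] at hj
    rw [Finset.mem_range]
    by_contra hnj
    have := hf (show i ≤ j by omega)
    omega
  have hcard := Finset.card_le_card hsub
  rw [Finset.card_range] at hcard
  unfold numParts at h
  omega

theorem sum_range_add_le {n k : ℕ} {f : ℕ → ℕ} (hpos : ∀ i ≤ n, 0 < f i) (d : ℕ)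
    (hd : k + d ≤ n + 1) :
    ∑ i ∈ Finset.range k, f i + d ≤ ∑ i ∈ Finset.range (k + d), f i := by
  induction d with
  | zero => simp
  | succ d ih =>
    have := ih (by omega)
    have := hpos (k + d) (by omega)
    rw [← add_assoc k d 1, Finset.sum_range_succ]
    omega

/-- In a partition of `2n` with more than `n` parts, the first `k + 1` parts sum to at most
`n + k`. -/
theorem sum_range_succ_le_of_mem_defectiveSp {n : ℕ} {f : ℕ → ℕ} (hf : f ∈ defectiveSp n)
    (k : ℕ) : ∑ i ∈ Finset.range (k + 1), f i ≤ n + min k n := by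
  obtain ⟨⟨hpart, -⟩, hnum⟩ := hf
  rcases le_total k n with hk | hk
  · have h₁ := sum_range_add_le (k := k + 1)
      (fun i hi => pos_of_lt_numParts hpart.1 hnum hi) (n - k) (by omega)
    have h₂ := hpart.sum_range_le (k + 1 + (n - k))
    omega
  · have := hpart.sum_range_le (k + 1)
    omega

theorem sum_range_succ_hookPart (a b k : ℕ) :
    ∑ i ∈ Finset.range (k + 1), hookPart a b i = a + min k b := by
  induction k with
  | zero => simp [hookPart]
  | succ k ih =>
    rw [Finset.sum_range_succ, ih]
    simp only [hookPart]
    split_ifs <;> grind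

theorem sum_range_add_two_hook2Part (a b k : ℕ) :
    ∑ i ∈ Finset.range (k + 2), hook2Part a b i = a + 2 + min k b := by
  induction k with
  | zero => simp [hook2Part, Finset.sum_range_succ]
  | succ k ih =>
    rw [show k + 1 + 2 = k + 2 + 1 by ring, Finset.sum_range_succ, ih]
    simp only [hook2Part]
    split_ifs <;> grind

theorem lt_numParts {N n : ℕ} {f : ℕ → ℕ} (hN : n < N) (hpos : ∀ i ≤ n, f i ≠ 0) :
    n < numParts N f := by
  have hsub : Finset.range (n + 1) ⊆ (Finset.range N).filter (fun j => f j ≠ 0) := by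
    intro j hj
    rw [Finset.mem_range] at hj
    exact Finset.mem_filter.2 ⟨Finset.mem_range.2 (by omega), hpos j (by omega)⟩
  have hcard := Finset.card_le_card hsub
  rw [Finset.card_range] at hcard
  exact hcard

/-- If the only odd part is `1`, occupying the positions `[s, t)` with `t - s` even, then odd parts
have even multiplicity. -/
theorem even_multPart_of_ones {N s t : ℕ} {f : ℕ → ℕ} (ht : t ≤ N) (hst : Even (t - s))
    (hone : ∀ i, f i = 1 ↔ s ≤ i ∧ i < t) (hodd : ∀ i, Odd (f i) → f i = 1) {q : ℕ}
    (hq : Odd q) : Even (multPart N f q) := by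
  unfold multPart
  by_cases hq1 : q = 1
  · have : (Finset.range N).filter (fun i => f i = q) = Finset.Ico s t := by
      ext i
      simp only [Finset.mem_filter, Finset.mem_range, Finset.mem_Ico, hq1, hone]
      omega
    rwa [this, Nat.card_Ico]
  · rw [Finset.filter_false_of_mem]
    · simp
    · rintro i - rfl
      exact hq1 (hodd i hq)

theorem hookPart_mem_defectiveSp {m : ℕ} (hm : 1 ≤ m) :
    hookPart (2 * m) (2 * m) ∈ defectiveSp (2 * m) := by
  refine ⟨⟨⟨?_, ?_, ?_⟩, fun q hq => ?_⟩, ?_⟩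
  · intro i j hij
    simp only [hookPart]
    split_ifs <;> omega
  · simp only [hookPart]
    split_ifs <;> omega
  · have h := sum_range_succ_hookPart (2 * m) (2 * m) (2 * (2 * m) - 1)
    rw [show 2 * (2 * m) - 1 + 1 = 2 * (2 * m) by omega] at h
    omega
  · refine even_multPart_of_ones (s := 1) (t := 2 * m + 1) (by omega) (by simp) ?_ ?_ hq
    · intro i
      simp only [hookPart]
      split_ifs <;> grind
    · intro i
      simp only [hookPart, Nat.odd_iff]
      split_ifs <;> grind
  · refine lt_numParts (by omega) fun i hi => ?_
    simp only [hookPart]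
    split_ifs <;> omega

theorem hook2Part_mem_defectiveSp {m : ℕ} (hm : 1 ≤ m) :
    hook2Part (2 * m) (2 * m) ∈ defectiveSp (2 * m + 1) := by
  refine ⟨⟨⟨?_, ?_, ?_⟩, fun q hq => ?_⟩, ?_⟩
  · intro i j hij
    simp only [hook2Part]
    split_ifs <;> omega
  · simp only [hook2Part]
    split_ifs <;> grind
  · have h := sum_range_add_two_hook2Part (2 * m) (2 * m) (2 * (2 * m))
    rw [show 2 * (2 * m) + 2 = 2 * (2 * m + 1) by ring] at h
    omega
  · refine even_multPart_of_ones (s := 2) (t := 2 * m + 2) (by omega) (by simp) ?_ ?_ hq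
    · intro i
      simp only [hook2Part]
      split_ifs <;> grind
    · intro i
      simp only [hook2Part, Nat.odd_iff]
      split_ifs <;> grind
  · refine lt_numParts (by omega) fun i hi => ?_
    simp only [hook2Part]
    split_ifs <;> omega

/-- An odd largest part of a symplectic partition is repeated. -/
theorem SymplecticPartition.apply_one_eq {N : ℕ} {f : ℕ → ℕ} (hf : SymplecticPartition N f)
    (hN : 0 < N) (hodd : Odd (f 0)) : f 1 = f 0 := by
  by_contra hne
  have hfilter : (Finset.range N).filter (fun i => f i = f 0) = {0} := by
    ext i
    simp only [Finset.mem_filter, Finset.mem_range, Finset.mem_singleton]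
    constructor
    · rintro ⟨-, hi⟩
      by_contra hi0
      have h₁ := hf.1.1 (show 1 ≤ i by omega)
      have h₂ := hf.1.1 (show 0 ≤ 1 by omega)
      omega
    · rintro rfl
      exact ⟨hN, rfl⟩
  have heven := hf.2 _ hodd
  rw [multPart, hfilter, Finset.card_singleton] at heven
  exact absurd heven (by decide)

theorem dominates_hookPart {n : ℕ} {f : ℕ → ℕ} (hf : f ∈ defectiveSp n) :
    Dominates f (hookPart n n) := by
  rintro (_ | k)
  · simp
  · rw [sum_range_succ_hookPart]
    exact sum_range_succ_le_of_mem_defectiveSp hf k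

theorem dominates_hook2Part {m : ℕ} (hm : 1 ≤ m) {f : ℕ → ℕ}
    (hf : f ∈ defectiveSp (2 * m + 1)) : Dominates f (hook2Part (2 * m) (2 * m)) := by
  have hbound := sum_range_succ_le_of_mem_defectiveSp hf
  rintro (_ | _ | k)
  · simp
  · have h₀ := hbound 0
    have h₁ := hbound 1
    simp only [Finset.sum_range_succ, Finset.sum_range_zero] at h₀ h₁
    have hne : f 0 ≠ 2 * m + 1 := fun h => by
      have := hf.1.apply_one_eq (by omega) (h ▸ odd_two_mul_add_one m)
      omega
    simp only [zero_add, Finset.sum_range_one, hook2Part, if_true]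
    omega
  · have := hbound (k + 1)
    rw [sum_range_add_two_hook2Part]
    omega

/-- The maximal defective nilpotent `Sp_{2n}`-orbits: `(2m, 1^{2m})` for `n = 2m` and
`(2m, 2, 1^{2m})` for `n = 2m + 1`. -/
theorem stmt11 (n : ℕ) (hn : 2 ≤ n) :
    (∀ m : ℕ, n = 2 * m →
      maximalsIn (defectiveSp n) = {hookPart (2 * m) (2 * m)}) ∧
    (∀ m : ℕ, n = 2 * m + 1 →
      maximalsIn (defectiveSp n) = {hook2Part (2 * m) (2 * m)}) := by
  refine ⟨?_, ?_⟩
  · rintro m rfl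
    exact maximalsIn_eq_singleton (hookPart_mem_defectiveSp (by omega))
      fun f hf => dominates_hookPart hf
  · rintro m rfl
    exact maximalsIn_eq_singleton (hook2Part_mem_defectiveSp (by omega))
      fun f hf => dominates_hook2Part (by omega) hf
end
end
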